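/- arXiv:2403.04728 — 4 statements merged into one kernel-verified Lean document; each statement's English description precedes it below -/
import Mathlib

section
/- Let t ≥ 1 be a positive integer, let ε > 0, and let A be a zero-one matrix in which every row contains at most t one-entries. Then there is a constant C (depending on A, t and ε) such that for every positive integer n, ex(n, A) ≤ C · n^{2 − 1/t + ε}. -/
/-- A zero-one matrix `M` (with rows `Fin m`, columns `Fin n`) contains a zero-one matrix `A`
if there are strictly increasing injections of rows and columns such that every 1-entry of `A`
corresponds to a 1-entry of `M`. -/
def matContains {m n a b : ℕ} (M : Fin m → Fin n → Bool) (A : Fin a → Fin b → Bool) : Prop :=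
  ∃ f : Fin a → Fin m, ∃ g : Fin b → Fin n, StrictMono f ∧ StrictMono g ∧
    ∀ i j, A i j = true → M (f i) (g j) = true

/-- The weight of a zero-one matrix: its number of 1-entries. -/
def matWeight {m n : ℕ} (M : Fin m → Fin n → Bool) : ℕ :=
  (Finset.univ.filter fun p : Fin m × Fin n => M p.1 p.2 = true).card

/-- The extremal number `ex(n, A)`: the maximum weight of an `n × n` zero-one matrix
not containing `A`. -/
noncomputable def matEx {a b : ℕ} (n : ℕ) (A : Fin a → Fin b → Bool) : ℕ :=
  sSup {w : ℕ | ∃ M : Fin n → Fin n → Bool, ¬ matContains M A ∧ matWeight M = w}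

/-!
Fix a base `m` of size about `n ^ (1 / L)`, so that a distance between two rows has only `L`
possible *scales* `⌊log_m ·⌋`. For a row `r` and a set `T` of `t` columns, record the scales of the
distances from `r` to the lower rows with ones in all columns of `T`.

If the support of `r` is large and every such set `T` inside it shows at least `a` scales, Ramsey's
theorem yields `b` columns all of whose `t`-subsets show the same scales; picking one row per scale
produces a copy of `A`, since a larger scale means a lower row. So in a matrix avoiding `A` a
positive proportion of the `t`-subsets of each large row support show fewer than `a` scales.
Conversely, a fixed `T` has this property for at most `m ^ a * 2 ^ L` rows with ones in all its
columns, because at most `m ^ #J` of these rows show exactly the scales `J`. Double counting bounds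
the sum of the `t`-th powers of the row weights, and Jensen's inequality bounds the weight itself.
-/

open Finset
open scoped Nat

universe u v

section Ramsey

variable {α : Type u} {κ : Type v}

/-- All `t`-element subsets of `Q` receive the same colour under `c`. -/
def IsMonochromatic (t : ℕ) (c : Finset α → κ) (Q : Finset α) : Prop :=
  ∃ k, ∀ T ∈ powersetCard t Q, c T = k

/-- The colour under `c` of a `t`-element subset of `Q` depends only on its least element. This is
the intermediate stage in the Erdős–Rado proof of Ramsey's theorem. -/
def IsMinDetermined [Preorder α] (t : ℕ) (c : Finset α → κ) (Q : Finset α) : Prop :=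
  ∃ f : α → κ, ∀ T ∈ powersetCard t Q, ∀ x, IsLeast (T : Set α) x → c T = f x

/-- `N` is an upper bound for the Ramsey number of monochromatic sets of size `l` under colourings
of `t`-element sets by `κ`. The ground sets range over a fixed universe, and `c` colours all finite
sets, although only its values on `t`-element sets matter. -/
def IsRamseyBound (κ : Type v) (t l N : ℕ) : Prop :=
  ∀ (α : Type u) (c : Finset α → κ) (X : Finset α), N ≤ #X →
    ∃ Q ⊆ X, #Q = l ∧ IsMonochromatic t c Q

theorem IsMonochromatic.mono {t : ℕ} {c : Finset α → κ} {P Q : Finset α}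
    (hQ : IsMonochromatic t c Q) (hPQ : P ⊆ Q) : IsMonochromatic t c P :=
  hQ.imp fun _ hk T hT => hk T (powersetCard_mono hPQ hT)

theorem IsRamseyBound.mono {t l N N' : ℕ} (h : IsRamseyBound.{u} κ t l N) (hN : N ≤ N') :
    IsRamseyBound.{u} κ t l N' :=
  fun α c X hX => h α c X (hN.trans hX)

theorem isRamseyBound_zero (κ : Type v) (l : ℕ) : IsRamseyBound.{u} κ 0 l l := by
  intro α c X hX
  obtain ⟨Q, hQX, hQ⟩ := exists_subset_card_eq hX
  exact ⟨Q, hQX, hQ, c ∅, by simp⟩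

theorem IsMinDetermined.insert_of_forall_lt [LinearOrder α] {t : ℕ} {c : Finset α → κ}
    {Q : Finset α} {x : α} (hQ : IsMinDetermined (t + 1) c Q) (hx : ∀ y ∈ Q, x < y)
    (hmono : IsMonochromatic t (fun T => c (insert x T)) Q) :
    IsMinDetermined (t + 1) c (insert x Q) := by
  obtain ⟨f, hf⟩ := hQ
  obtain ⟨k, hk⟩ := hmono
  refine ⟨Function.update f x k, fun T hT z hz => ?_⟩
  obtain ⟨hTQ, hTcard⟩ := mem_powersetCard.1 hT
  by_cases hxT : x ∈ T
  · have hzx : z = x := by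
      rcases mem_insert.1 (hTQ hz.1) with h | h
      · exact h
      · exact absurd (hz.2 hxT) (hx z h).not_ge
    have herase : T.erase x ∈ powersetCard t Q :=
      mem_powersetCard.2 ⟨subset_insert_iff.1 hTQ, by rw [card_erase_of_mem hxT, hTcard]; rfl⟩
    rw [hzx, Function.update_self, ← hk _ herase]
    exact congrArg c (insert_erase hxT).symm
  · have hTQ' : T ⊆ Q := (subset_insert_iff_of_notMem hxT).1 hTQ
    rw [Function.update_of_ne (hx z (hTQ' hz.1)).ne']
    exact hf T (mem_powersetCard.2 ⟨hTQ', hTcard⟩) z hz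

theorem exists_isMinDetermined {t : ℕ} (ramsey : ∀ l, ∃ N, IsRamseyBound.{u} κ t l N) (s : ℕ) :
    ∃ N, ∀ (α : Type u) [LinearOrder α] (c : Finset α → κ) (X : Finset α), N ≤ #X →
      ∃ Q ⊆ X, #Q = s ∧ IsMinDetermined (t + 1) c Q := by
  induction s with
  | zero =>
    exact ⟨0, fun α _ c X _ => ⟨∅, empty_subset X, rfl, fun _ => c ∅, by simp⟩⟩
  | succ s ih =>
    obtain ⟨N, hN⟩ := ih
    obtain ⟨N', hN'⟩ := ramsey N
    refine ⟨N' + 1, fun α _ c X hX => ?_⟩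
    have hne : X.Nonempty := card_pos.1 (by lia)
    set x := X.min' hne
    have hxX : x ∈ X := X.min'_mem hne
    obtain ⟨P, hPX, hPcard, hP⟩ := hN' α (fun T => c (insert x T)) (X.erase x)
      (by rw [card_erase_of_mem hxX]; lia)
    obtain ⟨Q, hQP, hQcard, hQ⟩ := hN α c P hPcard.ge
    have hx : ∀ y ∈ Q, x < y := fun y hy => X.min'_lt_of_mem_erase_min' hne (hPX (hQP hy))
    refine ⟨insert x Q, ?_, ?_, hQ.insert_of_forall_lt hx (hP.mono hQP)⟩
    · exact insert_subset hxX ((hQP.trans hPX).trans (erase_subset x X))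
    · rw [card_insert_of_notMem fun h => (hx x h).false, hQcard]

theorem IsMinDetermined.exists_isMonochromatic [LinearOrder α] [Fintype κ] {t l : ℕ}
    {c : Finset α → κ} {Q : Finset α} (hQ : IsMinDetermined (t + 1) c Q)
    (hcard : Fintype.card κ * l < #Q) : ∃ P ⊆ Q, #P = l ∧ IsMonochromatic (t + 1) c P := by
  classical
  obtain ⟨f, hf⟩ := hQ
  obtain ⟨k, -, hk⟩ :=
    exists_lt_card_fiber_of_mul_lt_card_of_maps_to (f := f) (fun x _ => mem_univ (f x)) hcard
  obtain ⟨P, hP, hPcard⟩ := exists_subset_card_eq hk.le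
  have hPQ : P ⊆ Q := hP.trans (filter_subset _ _)
  refine ⟨P, hPQ, hPcard, k, fun T hT => ?_⟩
  obtain ⟨hTP, hTcard⟩ := mem_powersetCard.1 hT
  have hne : T.Nonempty := card_pos.1 (by lia)
  rw [hf T (mem_powersetCard.2 ⟨hTP.trans hPQ, hTcard⟩) _ (T.isLeast_min' hne)]
  exact (mem_filter.1 (hP (hTP (T.min'_mem hne)))).2

theorem exists_isRamseyBound (κ : Type v) [Finite κ] (t l : ℕ) :
    ∃ N, IsRamseyBound.{u} κ t l N := by
  have := Fintype.ofFinite κ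
  induction t generalizing l with
  | zero => exact ⟨l, isRamseyBound_zero κ l⟩
  | succ t ih =>
    obtain ⟨N, hN⟩ := exists_isMinDetermined ih (Fintype.card κ * l + 1)
    refine ⟨N, fun α c X hX => ?_⟩
    obtain ⟨_, -⟩ := exists_wellFoundedLT α
    obtain ⟨Q, hQX, hQcard, hQ⟩ := hN α c X hX
    obtain ⟨P, hPQ, hP⟩ := hQ.exists_isMonochromatic (l := l) (by lia)
    exact ⟨P, hPQ.trans hQX, hP⟩

end Ramsey

section Supersaturation

variable {α : Type*} {t R : ℕ} {V : Finset α} {B : Finset (Finset α)}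

theorem choose_le_choose_mul_card_of_forall_exists_subset (hB : B ⊆ powersetCard t V)
    (hR : R ≤ #V) (h : ∀ P ∈ powersetCard R V, ∃ T ∈ B, T ⊆ P) :
    (#V).choose t ≤ R.choose t * #B := by
  classical
  have htR : t ≤ R := by
    obtain ⟨P, hP⟩ := powersetCard_nonempty.2 hR
    obtain ⟨T, hT, hTP⟩ := h P hP
    rw [← (mem_powersetCard.1 (hB hT)).2, ← (mem_powersetCard.1 hP).2]
    exact card_le_card hTP
  have hcount : #(powersetCard R V) * 1 ≤ #B * (#V - t).choose (R - t) := by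
    refine card_mul_le_card_mul (fun P T => T ⊆ P) (fun P hP => ?_) fun T hT => ?_
    · obtain ⟨T, hT, hTP⟩ := h P hP
      exact card_pos.2 ⟨T, (mem_bipartiteAbove _).2 ⟨hT, hTP⟩⟩
    · obtain ⟨hTV, rfl⟩ := mem_powersetCard.1 (hB hT)
      exact (card_filter_powersetCard_subset T V R hTV htR).le
  refine Nat.le_of_mul_le_mul_right ?_ (Nat.choose_pos (Nat.sub_le_sub_right hR t))
  calc (#V).choose t * (#V - t).choose (R - t)
      = #(powersetCard R V) * 1 * R.choose t := by
        rw [← Nat.choose_mul htR, card_powersetCard, mul_one]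
    _ ≤ #B * (#V - t).choose (R - t) * R.choose t := Nat.mul_le_mul_right _ hcount
    _ = R.choose t * #B * (#V - t).choose (R - t) := by ring

theorem pow_le_two_pow_mul_factorial_mul_choose {d : ℕ} (h : 2 * t ≤ d) :
    d ^ t ≤ 2 ^ t * t ! * d.choose t :=
  calc d ^ t ≤ (2 * (d + 1 - t)) ^ t := Nat.pow_le_pow_left (by lia) t
    _ = 2 ^ t * (d + 1 - t) ^ t := mul_pow _ _ _
    _ ≤ 2 ^ t * d.descFactorial t := Nat.mul_le_mul_left _ (Nat.pow_sub_le_descFactorial d t)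
    _ = 2 ^ t * t ! * d.choose t := by
      rw [Nat.descFactorial_eq_factorial_mul_choose, mul_assoc]

theorem card_pow_le_add_of_forall_exists_subset (htR : 2 * t ≤ R) (hB : B ⊆ powersetCard t V)
    (h : ∀ P ∈ powersetCard R V, ∃ T ∈ B, T ⊆ P) :
    #V ^ t ≤ R ^ t + 2 ^ t * t ! * R.choose t * #B := by
  rcases lt_or_ge #V R with hlt | hge
  · exact (Nat.pow_le_pow_left hlt.le t).trans (Nat.le_add_right _ _)
  · calc #V ^ t ≤ 2 ^ t * t ! * (#V).choose t :=
          pow_le_two_pow_mul_factorial_mul_choose (htR.trans hge)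
      _ ≤ 2 ^ t * t ! * (R.choose t * #B) :=
          Nat.mul_le_mul_left _ (choose_le_choose_mul_card_of_forall_exists_subset hB hge h)
      _ = 2 ^ t * t ! * R.choose t * #B := (mul_assoc _ _ _).symm
      _ ≤ R ^ t + 2 ^ t * t ! * R.choose t * #B := Nat.le_add_left _ _

end Supersaturation

theorem card_le_pow_card_of_log_sub_mem {m : ℕ} (hm : 1 < m) (J X : Finset ℕ)
    (h : ∀ x ∈ X, ∀ y ∈ X, x < y → Nat.log m (y - x) ∈ J) : #X ≤ m ^ #J := by
  -- Remove the largest scale `j`: cut `X` into at most `m` windows of length `m ^ j` starting at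
  -- `min X`; inside a window the scale `j` no longer occurs.
  induction J using Finset.induction_on_max generalizing X with
  | empty =>
    rw [card_empty, pow_zero, card_le_one_iff_subsingleton]
    exact fun x hx y hy => le_antisymm (not_lt.1 fun hyx => notMem_empty _ (h y hy x hx hyx))
      (not_lt.1 fun hxy => notMem_empty _ (h x hx y hy hxy))
  | insert j J hJ ih =>
    rcases X.eq_empty_or_nonempty with rfl | hne
    · simp
    set x₀ := X.min' hne
    have hmin : ∀ x ∈ X, x₀ ≤ x := fun x hx => X.min'_le x hx
    have hpos : 0 < m ^ j := by positivity
    have hwindow : ∀ x ∈ X, (x - x₀) / m ^ j ∈ range m := by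
      intro x hx
      rw [mem_range, Nat.div_lt_iff_lt_mul hpos, ← pow_succ']
      rcases (hmin x hx).eq_or_lt with rfl | hlt
      · simp only [Nat.sub_self]; positivity
      · have hle : Nat.log m (x - x₀) ≤ j :=
          (mem_insert.1 (h x₀ (X.min'_mem hne) x hx hlt)).elim le_of_eq fun hmem => (hJ _ hmem).le
        exact Nat.lt_pow_of_log_lt hm (Nat.lt_succ_of_le hle)
    have hfiber : ∀ i ∈ range m, #{x ∈ X | (x - x₀) / m ^ j = i} ≤ m ^ #J := by
      refine fun i _ => ih _ fun x hx y hy hxy => ?_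
      obtain ⟨hxX, hxi⟩ := mem_filter.1 hx
      obtain ⟨hyX, hyi⟩ := mem_filter.1 hy
      refine (mem_insert.1 (h x hxX y hyX hxy)).resolve_left fun hlog => ?_
      have hdist : m ^ j ≤ y - x := hlog ▸ Nat.pow_log_le_self m (by lia)
      have hnext : (x - x₀) / m ^ j + 1 ≤ (y - x₀) / m ^ j := by
        rw [← Nat.add_div_right _ hpos]
        exact Nat.div_le_div_right (by have := hmin x hxX; lia)
      lia
    calc #X ≤ m ^ #J * #(range m) := card_le_mul_card_image_of_maps_to hwindow _ hfiber
      _ = m ^ #(insert j J) := by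
        rw [card_range, card_insert_of_notMem fun hj => (hJ j hj).false, pow_succ]

theorem exists_nat_le_pow_and_le_two_mul_rpow {n L : ℕ} (hn : 0 < n) (hL : L ≠ 0) :
    ∃ m : ℕ, 1 < m ∧ n ≤ m ^ L ∧ (m : ℝ) ≤ 2 * (n : ℝ) ^ (1 / L : ℝ) := by
  have hroot : 1 ≤ (n : ℝ) ^ (1 / L : ℝ) :=
    Real.one_le_rpow (by exact_mod_cast hn) (by positivity)
  refine ⟨⌊(n : ℝ) ^ (1 / L : ℝ)⌋₊ + 1, ?_, ?_, ?_⟩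
  · exact Nat.succ_lt_succ (Nat.floor_pos.2 hroot)
  · have hle : (n : ℝ) ≤ (⌊(n : ℝ) ^ (1 / L : ℝ)⌋₊ + 1 : ℝ) ^ L :=
      calc (n : ℝ) = ((n : ℝ) ^ (1 / L : ℝ)) ^ L := by
            rw [one_div, Real.rpow_inv_natCast_pow n.cast_nonneg hL]
        _ ≤ (⌊(n : ℝ) ^ (1 / L : ℝ)⌋₊ + 1 : ℝ) ^ L :=
            pow_le_pow_left₀ (by positivity) (Nat.lt_floor_add_one _).le L
    exact_mod_cast hle
  · push_cast
    linarith [Nat.floor_le (zero_le_one.trans hroot)]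

section ZeroOneMatrix

variable {p q a b t m L : ℕ} {M : Fin p → Fin q → Bool} {A : Fin a → Fin b → Bool}

/-- The columns in which row `i` of the zero-one matrix `M` has a one. -/
def rowSupport (M : Fin p → Fin q → Bool) (i : Fin p) : Finset (Fin q) := {j | M i j = true}

/-- The rows of `M` with ones in all columns of `T`. -/
def commonRows (M : Fin p → Fin q → Bool) (T : Finset (Fin q)) : Finset (Fin p) :=
  {s | T ⊆ rowSupport M s}

/-- The scales of `T` seen from row `r`: the base-`m` orders of magnitude of the distances from `r`
to the rows with larger index that have ones in all columns of `T`. -/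
def scales (m : ℕ) (M : Fin p → Fin q → Bool) (r : Fin p) (T : Finset (Fin q)) : Finset ℕ :=
  {s ∈ commonRows M T | r < s}.image fun s : Fin p => Nat.log m ((s : ℕ) - r)

/-- The `t`-element sets of columns in the support of row `r` that have fewer than `a` scales seen
from `r`; in a matrix avoiding a pattern with `a` rows these are abundant. -/
def poorSubsets (t a m : ℕ) (M : Fin p → Fin q → Bool) (r : Fin p) : Finset (Finset (Fin q)) :=
  {T ∈ powersetCard t (rowSupport M r) | #(scales m M r T) < a}

theorem mem_rowSupport {i : Fin p} {j : Fin q} : j ∈ rowSupport M i ↔ M i j = true := by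
  simp [rowSupport]

theorem mem_commonRows {T : Finset (Fin q)} {s : Fin p} :
    s ∈ commonRows M T ↔ T ⊆ rowSupport M s := by
  simp [commonRows]

theorem mem_scales {r : Fin p} {T : Finset (Fin q)} {j : ℕ} :
    j ∈ scales m M r T ↔ ∃ s, (T ⊆ rowSupport M s ∧ r < s) ∧ Nat.log m ((s : ℕ) - r) = j := by
  simp [scales, mem_commonRows]

theorem matWeight_eq_sum_card_rowSupport (M : Fin p → Fin q → Bool) :
    matWeight M = ∑ r, #(rowSupport M r) := by
  simp only [matWeight, rowSupport, card_filter, Fintype.sum_prod_type]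

theorem scales_subset_range (hp : p ≤ m ^ L) (r : Fin p) (T : Finset (Fin q)) :
    scales m M r T ⊆ range L := by
  intro j hj
  obtain ⟨s, ⟨-, hrs⟩, rfl⟩ := mem_scales.1 hj
  exact mem_range.2 (Nat.log_lt_of_lt_pow (by lia) (by lia))

theorem matContains_of_subset_scales (hA : ∀ i, #(rowSupport A i) ≤ t) {r : Fin p}
    {Q : Finset (Fin q)} (hbQ : b ≤ #Q) (htQ : t ≤ #Q) {J : Finset ℕ} (hJ : a ≤ #J)
    (h : ∀ T ∈ powersetCard t Q, J ⊆ scales m M r T) : matContains M A := by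
  let g : Fin b ↪o Fin q := Q.orderEmbOfCardLe hbQ
  let e : Fin a ↪o ℕ := J.orderEmbOfCardLe hJ
  have hrow : ∀ i, ∃ s : Fin p, Nat.log m ((s : ℕ) - r) = e i ∧
      ∀ j, A i j = true → M s (g j) = true := by
    intro i
    obtain ⟨T, hgT, hTQ, hTcard⟩ := exists_subsuperset_card_eq (s := (rowSupport A i).image g)
      (image_subset_iff.2 fun j _ => Q.orderEmbOfCardLe_mem hbQ j)
      (card_image_le.trans (hA i)) htQ
    obtain ⟨s, ⟨hTs, -⟩, hs⟩ := mem_scales.1 <|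
      h T (mem_powersetCard.2 ⟨hTQ, hTcard⟩) (J.orderEmbOfCardLe_mem hJ i)
    exact ⟨s, hs, fun j hj =>
      mem_rowSupport.1 (hTs (hgT (mem_image_of_mem g (mem_rowSupport.2 hj))))⟩
  choose f hlog hones using hrow
  refine ⟨f, g, fun i j hij => ?_, g.strictMono, hones⟩
  have hlt : Nat.log m ((f i : ℕ) - r) < Nat.log m ((f j : ℕ) - r) := by
    rw [hlog, hlog]
    exact e.strictMono hij
  exact lt_of_not_ge fun hle => hlt.not_ge (Nat.log_mono_right (Nat.sub_le_sub_right hle r))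

theorem exists_mem_poorSubsets_subset (hA : ∀ i, #(rowSupport A i) ≤ t) (hM : ¬ matContains M A)
    (hp : p ≤ m ^ L) {R : ℕ} (hR : IsRamseyBound.{0} (range L).powerset t (max b t) R) {r : Fin p}
    {P : Finset (Fin q)} (hP : P ∈ powersetCard R (rowSupport M r)) :
    ∃ T ∈ poorSubsets t a m M r, T ⊆ P := by
  obtain ⟨hPr, hPcard⟩ := mem_powersetCard.1 hP
  obtain ⟨Q, hQP, hQcard, J, hJ⟩ := hR (Fin q)
    (fun T => ⟨scales m M r T, mem_powerset.2 (scales_subset_range hp r T)⟩) P hPcard.ge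
  have hscales : ∀ T ∈ powersetCard t Q, scales m M r T = J :=
    fun T hT => congrArg Subtype.val (hJ T hT)
  have hbQ : b ≤ #Q := hQcard ▸ le_max_left b t
  have htQ : t ≤ #Q := hQcard ▸ le_max_right b t
  obtain ⟨T, hT⟩ := powersetCard_nonempty.2 htQ
  obtain ⟨hTQ, hTcard⟩ := mem_powersetCard.1 hT
  refine ⟨T, mem_filter.2 ⟨mem_powersetCard.2 ⟨(hTQ.trans hQP).trans hPr, hTcard⟩, ?_⟩,
    hTQ.trans hQP⟩
  rw [hscales T hT]
  exact lt_of_not_ge fun hJa =>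
    hM (matContains_of_subset_scales hA hbQ htQ hJa fun T hT => (hscales T hT).ge)

theorem card_rowSupport_pow_le (hA : ∀ i, #(rowSupport A i) ≤ t) (hM : ¬ matContains M A)
    (hp : p ≤ m ^ L) {R : ℕ} (hR : IsRamseyBound.{0} (range L).powerset t (max b t) R)
    (htR : 2 * t ≤ R) (r : Fin p) :
    #(rowSupport M r) ^ t ≤ R ^ t + 2 ^ t * t ! * R.choose t * #(poorSubsets t a m M r) :=
  card_pow_le_add_of_forall_exists_subset htR (filter_subset _ _)
    fun _ hP => exists_mem_poorSubsets_subset hA hM hp hR hP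

theorem card_filter_scales_eq_le (hm : 1 < m) (M : Fin p → Fin q → Bool) (T : Finset (Fin q))
    (J : Finset ℕ) : #{r ∈ commonRows M T | scales m M r T = J} ≤ m ^ #J := by
  rw [← card_map Fin.valEmbedding]
  refine card_le_pow_card_of_log_sub_mem hm J _ fun x hx y hy hxy => ?_
  obtain ⟨r, hr, rfl⟩ := mem_map.1 hx
  obtain ⟨s, hs, rfl⟩ := mem_map.1 hy
  rw [← (mem_filter.1 hr).2]
  exact mem_scales.2 ⟨s, ⟨mem_commonRows.1 (mem_filter.1 hs).1, hxy⟩, rfl⟩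

theorem card_filter_card_scales_lt_le (hm : 1 < m) (hp : p ≤ m ^ L) (M : Fin p → Fin q → Bool)
    (a : ℕ) (T : Finset (Fin q)) :
    #{r ∈ commonRows M T | #(scales m M r T) < a} ≤ m ^ a * 2 ^ L := by
  calc #{r ∈ commonRows M T | #(scales m M r T) < a}
      ≤ m ^ a * #(range L).powerset := by
        refine card_le_mul_card_image_of_maps_to (f := fun r => scales m M r T)
          (fun r _ => mem_powerset.2 (scales_subset_range hp r T)) _ fun J _ => ?_
        rcases lt_or_ge #J a with hJ | hJ
        · rw [filter_comm]
          exact (card_le_card (filter_subset _ _)).trans <|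
            (card_filter_scales_eq_le hm M T J).trans (Nat.pow_le_pow_right (by lia) hJ.le)
        · rw [filter_false_of_mem]
          · exact Nat.zero_le _
          · rintro r hr rfl
            exact hJ.not_gt (mem_filter.1 hr).2
    _ = m ^ a * 2 ^ L := by rw [card_powerset, card_range]

theorem sum_card_poorSubsets_le (hm : 1 < m) (hp : p ≤ m ^ L) (M : Fin p → Fin q → Bool)
    (t a : ℕ) : ∑ r, #(poorSubsets t a m M r) ≤ q ^ t * (m ^ a * 2 ^ L) := by
  let poor (r : Fin p) (T : Finset (Fin q)) : Prop :=
    T ⊆ rowSupport M r ∧ #(scales m M r T) < a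
  calc ∑ r, #(poorSubsets t a m M r)
      = ∑ r, #((powersetCard t univ).bipartiteAbove poor r) := by
        refine sum_congr rfl fun r _ => congrArg card ?_
        ext T
        simp only [poorSubsets, poor, mem_filter, mem_powersetCard, mem_bipartiteAbove,
          subset_univ, true_and]
        tauto
    _ = ∑ T ∈ powersetCard t univ, #{r ∈ commonRows M T | #(scales m M r T) < a} := by
        rw [sum_card_bipartiteAbove_eq_sum_card_bipartiteBelow]
        simp only [bipartiteBelow, poor, commonRows, filter_filter]
    _ ≤ ∑ T ∈ powersetCard t (univ : Finset (Fin q)), m ^ a * 2 ^ L :=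
        sum_le_sum fun T _ => card_filter_card_scales_lt_le hm hp M a T
    _ = q.choose t * (m ^ a * 2 ^ L) := by simp
    _ ≤ q ^ t * (m ^ a * 2 ^ L) := Nat.mul_le_mul_right _ (Nat.choose_le_pow q t)

theorem exists_matWeight_pow_le (ht : 1 ≤ t) (hA : ∀ i, #(rowSupport A i) ≤ t) (L : ℕ) :
    ∃ C, ∀ p q m, 1 < m → p ≤ m ^ L → ∀ M : Fin p → Fin q → Bool, ¬ matContains M A →
      matWeight M ^ t ≤ C * p ^ (t - 1) * (p + q ^ t * m ^ a) := by
  obtain ⟨N, hN⟩ := exists_isRamseyBound.{0} (range L).powerset t (max b t)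
  set R := N + 2 * t
  have hR := hN.mono (N.le_add_right (2 * t))
  set K := 2 ^ t * t ! * R.choose t
  refine ⟨R ^ t + K * 2 ^ L, fun p q m hm hp M hM => ?_⟩
  have hjensen : matWeight M ^ t ≤ p ^ (t - 1) * ∑ r, #(rowSupport M r) ^ t := by
    have h := pow_sum_le_card_mul_sum_pow (s := univ) (f := fun r => #(rowSupport M r))
      (fun _ _ => Nat.zero_le _) (t - 1)
    rwa [← matWeight_eq_sum_card_rowSupport, Nat.sub_add_cancel ht, card_univ, Fintype.card_fin,
      Nat.cast_id] at h
  calc matWeight M ^ t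
      ≤ p ^ (t - 1) * ∑ r, #(rowSupport M r) ^ t := hjensen
    _ ≤ p ^ (t - 1) * ∑ r, (R ^ t + K * #(poorSubsets t a m M r)) := by
        gcongr with r
        exact card_rowSupport_pow_le hA hM hp hR (Nat.le_add_left _ _) r
    _ = p ^ (t - 1) * (p * R ^ t + K * ∑ r, #(poorSubsets t a m M r)) := by
        simp [sum_add_distrib, mul_sum]
    _ ≤ p ^ (t - 1) * (p * R ^ t + K * (q ^ t * (m ^ a * 2 ^ L))) := by
        gcongr
        exact sum_card_poorSubsets_le hm hp M t a
    _ ≤ p ^ (t - 1) * (p * R ^ t + K * (q ^ t * (m ^ a * 2 ^ L)))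
          + p ^ (t - 1) * (p * (K * 2 ^ L) + R ^ t * (q ^ t * m ^ a)) := Nat.le_add_right _ _
    _ = (R ^ t + K * 2 ^ L) * p ^ (t - 1) * (p + q ^ t * m ^ a) := by ring

theorem exists_matWeight_pow_le_rpow (ht : 1 ≤ t) (hA : ∀ i, #(rowSupport A i) ≤ t)
    (hL : L ≠ 0) :
    ∃ C : ℝ, 0 ≤ C ∧ ∀ n, 0 < n → ∀ M : Fin n → Fin n → Bool, ¬ matContains M A →
      (matWeight M : ℝ) ^ t ≤ C * (n : ℝ) ^ (2 * t - 1 + a / L : ℝ) := by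
  obtain ⟨C, hC⟩ := exists_matWeight_pow_le ht hA L
  refine ⟨2 * C * 2 ^ a, by positivity, fun n hn M hM => ?_⟩
  obtain ⟨m, hm, hnm, hmle⟩ := exists_nat_le_pow_and_le_two_mul_rpow hn hL
  have hn₀ : (0 : ℝ) < n := by exact_mod_cast hn
  have hle : n ≤ n ^ t * m ^ a :=
    (Nat.le_self_pow (by lia) n).trans (Nat.le_mul_of_pos_right _ (by positivity))
  have hweight : matWeight M ^ t ≤ 2 * C * (n ^ (t - 1) * n ^ t) * m ^ a :=
    calc matWeight M ^ t ≤ C * n ^ (t - 1) * (n + n ^ t * m ^ a) := hC n n m hm hnm M hM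
      _ ≤ C * n ^ (t - 1) * (n ^ t * m ^ a + n ^ t * m ^ a) := by gcongr
      _ = 2 * C * (n ^ (t - 1) * n ^ t) * m ^ a := by ring
  calc (matWeight M : ℝ) ^ t ≤ 2 * C * ((n : ℝ) ^ (t - 1) * (n : ℝ) ^ t) * (m : ℝ) ^ a := by
        exact_mod_cast hweight
    _ ≤ 2 * C * ((n : ℝ) ^ (t - 1) * (n : ℝ) ^ t) * (2 * (n : ℝ) ^ (1 / L : ℝ)) ^ a := by gcongr
    _ = 2 * C * 2 ^ a *
          ((n : ℝ) ^ ((t - 1 : ℕ) : ℝ) * (n : ℝ) ^ (t : ℝ) * (n : ℝ) ^ (1 / L * a : ℝ)) := by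
        rw [mul_pow, ← Real.rpow_mul_natCast hn₀.le, Real.rpow_natCast, Real.rpow_natCast]
        ring
    _ = 2 * C * 2 ^ a * (n : ℝ) ^ (2 * t - 1 + a / L : ℝ) := by
        rw [← Real.rpow_add hn₀, ← Real.rpow_add hn₀, Nat.cast_sub ht]
        push_cast
        ring_nf

theorem matEx_le_of_forall_matWeight_le {n : ℕ} {w : ℝ} (hw : 0 ≤ w)
    (h : ∀ M : Fin n → Fin n → Bool, ¬ matContains M A → (matWeight M : ℝ) ≤ w) :
    (matEx n A : ℝ) ≤ w := by
  rw [← Nat.le_floor_iff hw]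
  apply csSup_le'
  rintro _ ⟨M, hM, rfl⟩
  exact Nat.le_floor (h M hM)

end ZeroOneMatrix

/-- If every row of the zero-one matrix `A` contains at most `t` one-entries, then
`ex(n, A) ≤ C · n^(2 - 1/t + ε)`. -/
theorem statement0 (t : ℕ) (ht : 1 ≤ t) (ε : ℝ) (hε : 0 < ε) (a b : ℕ)
    (A : Fin a → Fin b → Bool)
    (hA : ∀ i : Fin a, (Finset.univ.filter fun j : Fin b => A i j = true).card ≤ t) :
    ∃ C : ℝ, 0 < C ∧ ∀ n : ℕ, 0 < n →
      (matEx n A : ℝ) ≤ C * (n : ℝ) ^ (2 - 1 / (t : ℝ) + ε) := by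
  obtain ⟨L, hL⟩ := exists_nat_gt (a / ε)
  have hL₀ : (0 : ℝ) < L := (by positivity : 0 ≤ a / ε).trans_lt hL
  obtain ⟨C, hC₀, hC⟩ := exists_matWeight_pow_le_rpow ht hA (Nat.cast_pos.1 hL₀).ne'
  refine ⟨C + 1, by positivity, fun n hn =>
    matEx_le_of_forall_matWeight_le (by positivity) fun M hM => ?_⟩
  have ht₁ : (1 : ℝ) ≤ t := by exact_mod_cast ht
  have hexp : (2 * t - 1 + a / L : ℝ) ≤ (2 - 1 / t + ε) * t := by
    have haL : (a / L : ℝ) ≤ ε := (div_le_comm₀ hε hL₀).1 hL.le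
    have hmul : (2 - 1 / t + ε) * t = 2 * t - 1 + ε * t := by field_simp
    nlinarith
  refine le_of_pow_le_pow_left₀ (Nat.one_le_iff_ne_zero.1 ht) (by positivity) ?_
  calc (matWeight M : ℝ) ^ t ≤ C * (n : ℝ) ^ (2 * t - 1 + a / L : ℝ) := hC n hn M hM
    _ ≤ (C + 1) ^ t * (n : ℝ) ^ ((2 - 1 / t + ε) * t : ℝ) := by
        gcongr
        · exact (le_add_of_nonneg_right zero_le_one).trans
            (le_self_pow₀ (le_add_of_nonneg_left hC₀) (Nat.one_le_iff_ne_zero.1 ht))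
        · exact_mod_cast hn
    _ = ((C + 1) * (n : ℝ) ^ (2 - 1 / (t : ℝ) + ε)) ^ t := by
        rw [mul_pow, ← Real.rpow_mul_natCast n.cast_nonneg]
end

section
/- Let k and m be non-negative integers with k ≥ 1, and let T be a finite rooted tree in which every vertex has at most k children. Call a vertex of T branching if it has at least 2 children. Then the number of non-root leaves of T having at most m branching ancestors is at most k^m. -/
/-- In a rooted tree given by a parent function, the children of `v` are the non-root vertices
whose parent is `v`. -/
def children {V : Type*} (root : V) (parent : V → V) (v : V) : Set V :=
  {u : V | u ≠ root ∧ parent u = v}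

/-- A vertex is branching if it has at least two children. -/
def Branching {V : Type*} (root : V) (parent : V → V) (v : V) : Prop :=
  2 ≤ (children root parent v).ncard

/-- A vertex is a leaf if it has no children. -/
def IsLeaf {V : Type*} (root : V) (parent : V → V) (v : V) : Prop :=
  children root parent v = ∅

/-- The ancestors of `v` are the vertices other than `v` obtained by iterating the parent map. -/
def ancestors {V : Type*} (parent : V → V) (v : V) : Set V :=
  {u : V | u ≠ v ∧ ∃ n : ℕ, parent^[n] v = u}

/-!
Descend from the root, moving at each step to a uniformly random child. A vertex `v` is visited with
probability `∏ 1 / #children a` over its ancestors `a`; a non-branching ancestor contributes `1` and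
a branching one at least `1 / k`, so a vertex with at most `m` branching ancestors is visited with
probability at least `k⁻ᵐ`. A descent visits at most one leaf, so these probabilities sum to at most
`1` and there are at most `k ^ m` such leaves.
-/

section Development

variable {V : Type*} {root : V} {parent : V → V}

lemma eq_of_isPeriodicPt_of_iterate_eq {α : Type*} {f : α → α} {x y : α} {n N : ℕ} (hn : 0 < n)
    (hx : Function.IsPeriodicPt f n x) (hy : Function.IsFixedPt f y) (hN : f^[N] x = y) :
    x = y := by
  obtain ⟨d, hd⟩ := Nat.exists_eq_add_of_le' (Nat.le_mul_of_pos_right N hn)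
  calc x = f^[N * n] x := (hx.const_mul N).symm
    _ = f^[d] (f^[N] x) := by rw [hd, Function.iterate_add_apply]
    _ = y := by rw [hN, hy.iterate d]

lemma exists_mem_children_iterate_eq (hroot : parent root = root) {v w : V} {n : ℕ}
    (hn : parent^[n] w = v) (hne : w ≠ v) :
    ∃ u ∈ children root parent v, ∃ j < n, parent^[j] w = u := by
  induction n with
  | zero => exact absurd hn hne
  | succ n ih =>
    rw [Function.iterate_succ_apply'] at hn
    by_cases hr : parent^[n] w = root
    · obtain ⟨u, hu, j, hj, hw⟩ := ih (by rw [← hn, hr, hroot])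
      exact ⟨u, hu, j, hj.trans n.lt_succ_self, hw⟩
    · exact ⟨_, ⟨hr, hn⟩, n, n.lt_succ_self, rfl⟩

lemma IsLeaf.notMem_ancestors (hroot : parent root = root) {v : V} (hv : IsLeaf root parent v)
    (w : V) : v ∉ ancestors parent w := by
  rintro ⟨hne, n, hn⟩
  obtain ⟨u, hu, -⟩ := exists_mem_children_iterate_eq hroot hn hne.symm
  exact (Set.eq_empty_iff_forall_notMem.mp hv) u hu

lemma ancestors_root (hroot : parent root = root) : ancestors parent root = ∅ := by
  refine Set.eq_empty_of_forall_notMem ?_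
  rintro u ⟨hne, n, rfl⟩
  exact hne (Function.iterate_fixed hroot n)

lemma ancestors_subset_insert (v : V) :
    ancestors parent v ⊆ insert (parent v) (ancestors parent (parent v)) := by
  rintro u ⟨hne, _ | n, hn⟩
  · exact absurd hn.symm hne
  · exact or_iff_not_imp_left.mpr fun hu => ⟨hu, n, hn⟩

lemma ancestors_finite (hroot : parent root = root) {v : V} {n : ℕ} (hn : parent^[n] v = root) :
    (ancestors parent v).Finite := by
  induction n generalizing v with
  | zero =>
    obtain rfl : v = root := hn
    simp only [ancestors_root hroot, Set.finite_empty]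
  | succ n ih => exact ((ih hn).insert _).subset (ancestors_subset_insert v)

lemma ancestors_of_mem_children (hroot : parent root = root)
    (hreach : ∀ v : V, ∃ n : ℕ, parent^[n] v = root) {u v : V}
    (hu : u ∈ children root parent v) :
    ancestors parent u = insert v (ancestors parent v) := by
  obtain ⟨hne, rfl⟩ := hu
  have not_periodic (n : ℕ) : parent^[n + 1] u ≠ u := fun h =>
    hne (eq_of_isPeriodicPt_of_iterate_eq n.succ_pos h hroot (hreach u).choose_spec)
  refine (ancestors_subset_insert u).antisymm ?_
  rintro w (rfl | ⟨-, n, rfl⟩)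
  · exact ⟨not_periodic 0, 1, rfl⟩
  · exact ⟨not_periodic n, n + 1, rfl⟩

/-- The probability that the random descent from the root, which moves at each step to a uniformly
random child, visits `v`: at each ancestor `a` of `v` it picks the child leading to `v` with
probability `1 / #children a`. -/
noncomputable def visitProb (root : V) (parent : V → V) (v : V) : ℚ :=
  ∏ᶠ a ∈ ancestors parent v, ((children root parent a).ncard : ℚ)⁻¹

lemma visitProb_root (hroot : parent root = root) : visitProb root parent root = 1 := by
  simp only [visitProb, ancestors_root hroot, finprod_mem_empty]

lemma visitProb_nonneg (v : V) : 0 ≤ visitProb root parent v :=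
  finprod_nonneg fun _ => finprod_nonneg fun _ => by positivity

lemma visitProb_of_mem_children (hroot : parent root = root)
    (hreach : ∀ v : V, ∃ n : ℕ, parent^[n] v = root) {u v : V}
    (hu : u ∈ children root parent v) :
    visitProb root parent u =
      ((children root parent v).ncard : ℚ)⁻¹ * visitProb root parent v := by
  rw [visitProb, ancestors_of_mem_children hroot hreach hu,
    finprod_mem_insert _ (fun hv => hv.1 rfl) (ancestors_finite hroot (hreach v).choose_spec),
    visitProb]

lemma sum_visitProb_children_le (hroot : parent root = root)
    (hreach : ∀ v : V, ∃ n : ℕ, parent^[n] v = root) {v : V}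
    (hfin : (children root parent v).Finite) :
    ∑ u ∈ hfin.toFinset, visitProb root parent u ≤ visitProb root parent v := by
  rw [Finset.sum_congr rfl fun u hu =>
      visitProb_of_mem_children hroot hreach (hfin.mem_toFinset.mp hu),
    Finset.sum_const, nsmul_eq_mul, ← Set.ncard_eq_toFinset_card _ hfin, ← mul_assoc]
  exact mul_le_of_le_one_left (visitProb_nonneg v) mul_inv_le_one

lemma eq_singleton_of_antichain {S : Finset V} (hS : ∀ v ∈ S, ∀ w ∈ S, v ∉ ancestors parent w)
    {v : V} (hv : v ∈ S) (hbelow : ∀ w ∈ S, ∃ n : ℕ, parent^[n] w = v) : S = {v} := by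
  refine Finset.eq_singleton_iff_unique_mem.mpr ⟨hv, fun w hw => ?_⟩
  by_contra hne
  exact hS v hv w hw ⟨Ne.symm hne, hbelow w hw⟩

lemma sum_visitProb_le_of_antichain (hroot : parent root = root)
    (hreach : ∀ v : V, ∃ n : ℕ, parent^[n] v = root)
    (hfin : ∀ v : V, (children root parent v).Finite) {S : Finset V}
    (hS : ∀ v ∈ S, ∀ w ∈ S, v ∉ ancestors parent w) {v : V} {N : ℕ}
    (hN : ∀ w ∈ S, ∃ n < N, parent^[n] w = v) :
    ∑ w ∈ S, visitProb root parent w ≤ visitProb root parent v := by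
  classical
  induction N generalizing v S with
  | zero =>
    have hempty : S = ∅ := Finset.eq_empty_of_forall_notMem fun w hw => by
      obtain ⟨n, hn, -⟩ := hN w hw
      exact n.not_lt_zero hn
    rw [hempty, Finset.sum_empty]
    exact visitProb_nonneg v
  | succ N ih =>
    by_cases hv : v ∈ S
    · rw [eq_singleton_of_antichain hS hv fun w hw => (hN w hw).imp fun _ => And.right,
        Finset.sum_singleton]
    · have below_child : ∀ w ∈ S, ∃ u ∈ children root parent v, ∃ n < N, parent^[n] w = u := by
        intro w hw
        obtain ⟨n, hnN, hn⟩ := hN w hw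
        obtain ⟨u, hu, j, hj, hwu⟩ :=
          exists_mem_children_iterate_eq hroot hn (ne_of_mem_of_not_mem hw hv)
        exact ⟨u, hu, j, by omega, hwu⟩
      choose! childAbove childAbove_mem childAbove_iterate using below_child
      calc ∑ w ∈ S, visitProb root parent w
          = ∑ u ∈ (hfin v).toFinset, ∑ w ∈ S with childAbove w = u, visitProb root parent w :=
            (Finset.sum_fiberwise_of_maps_to
              (fun w hw => (hfin v).mem_toFinset.mpr (childAbove_mem w hw)) _).symm
        _ ≤ ∑ u ∈ (hfin v).toFinset, visitProb root parent u := by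
            refine Finset.sum_le_sum fun u _ => ih ?_ ?_
            · exact fun x hx y hy => hS x (Finset.mem_of_mem_filter x hx) y
                (Finset.mem_of_mem_filter y hy)
            · intro w hw
              obtain ⟨hwS, rfl⟩ := Finset.mem_filter.mp hw
              exact childAbove_iterate w hwS
        _ ≤ visitProb root parent v := sum_visitProb_children_le hroot hreach (hfin v)

lemma sum_visitProb_le_one_of_antichain (hroot : parent root = root)
    (hreach : ∀ v : V, ∃ n : ℕ, parent^[n] v = root)
    (hfin : ∀ v : V, (children root parent v).Finite) {S : Finset V}
    (hS : ∀ v ∈ S, ∀ w ∈ S, v ∉ ancestors parent w) :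
    ∑ w ∈ S, visitProb root parent w ≤ 1 := by
  choose depth hdepth using hreach
  rw [← visitProb_root hroot]
  exact sum_visitProb_le_of_antichain hroot (fun v => ⟨depth v, hdepth v⟩) hfin hS fun w hw =>
    ⟨depth w, Nat.lt_succ_of_le (Finset.le_sup hw), hdepth w⟩

lemma inv_pow_le_visitProb {k : ℕ} (hroot : parent root = root)
    (hfin : ∀ v : V, (children root parent v).Finite)
    (hdeg : ∀ v : V, (children root parent v).ncard ≤ k) {v : V}
    (hv : (ancestors parent v).Finite) :
    (k : ℚ)⁻¹ ^ (ancestors parent v ∩ {u : V | Branching root parent u}).ncard ≤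
      visitProb root parent v := by
  classical
  have factor_le (a : V) (ha : a ∈ ancestors parent v) :
      (if Branching root parent a then (k : ℚ)⁻¹ else 1) ≤
        ((children root parent a).ncard : ℚ)⁻¹ := by
    have hpos : 0 < (children root parent a).ncard :=
      (Set.ncard_pos (hfin a)).mpr <| Set.nonempty_iff_ne_empty.mpr fun hleaf =>
        IsLeaf.notMem_ancestors hroot hleaf v ha
    split_ifs with hb
    · gcongr
      exact hdeg a
    · have hone : (children root parent a).ncard = 1 := by
        unfold Branching at hb
        omega
      simp only [hone, Nat.cast_one, inv_one, le_refl]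
  calc (k : ℚ)⁻¹ ^ (ancestors parent v ∩ {u : V | Branching root parent u}).ncard
      = ∏ a ∈ hv.toFinset, if Branching root parent a then (k : ℚ)⁻¹ else 1 := by
        rw [Finset.prod_ite, Finset.prod_const, Finset.prod_const_one, mul_one,
          ← Set.ncard_coe_finset, Finset.coe_filter]
        simp only [hv.mem_toFinset]
        rfl
    _ ≤ ∏ a ∈ hv.toFinset, ((children root parent a).ncard : ℚ)⁻¹ :=
        Finset.prod_le_prod (fun a _ => by positivity) fun a ha =>
          factor_le a (hv.mem_toFinset.mp ha)
    _ = visitProb root parent v := (finprod_mem_eq_finite_toFinset_prod _ hv).symm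

lemma card_le_pow_of_antichain {k m : ℕ} (hk : 1 ≤ k) (hroot : parent root = root)
    (hreach : ∀ v : V, ∃ n : ℕ, parent^[n] v = root)
    (hfin : ∀ v : V, (children root parent v).Finite)
    (hdeg : ∀ v : V, (children root parent v).ncard ≤ k) {S : Finset V}
    (hS : ∀ v ∈ S, ∀ w ∈ S, v ∉ ancestors parent w)
    (hm : ∀ w ∈ S, (ancestors parent w ∩ {u : V | Branching root parent u}).ncard ≤ m) :
    S.card ≤ k ^ m := by
  have hk_pos : (0 : ℚ) < k := by exact_mod_cast hk
  have visitProb_ge : ∀ w ∈ S, (k : ℚ)⁻¹ ^ m ≤ visitProb root parent w := fun w hw =>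
    (pow_le_pow_of_le_one (by positivity) (Nat.cast_inv_le_one k) (hm w hw)).trans
      (inv_pow_le_visitProb hroot hfin hdeg (ancestors_finite hroot (hreach w).choose_spec))
  have mass_le_one : S.card * (k : ℚ)⁻¹ ^ m ≤ 1 :=
    calc S.card * (k : ℚ)⁻¹ ^ m ≤ ∑ w ∈ S, visitProb root parent w := by
          rw [← nsmul_eq_mul]
          exact Finset.card_nsmul_le_sum _ _ _ visitProb_ge
      _ ≤ 1 := sum_visitProb_le_one_of_antichain hroot hreach hfin hS
  rw [inv_pow, ← div_eq_mul_inv, div_le_one (pow_pos hk_pos m)] at mass_le_one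
  exact_mod_cast mass_le_one

end Development

theorem statement4_general (k m : ℕ) (hk : 1 ≤ k) (V : Type*) (root : V) (parent : V → V)
    (hroot : parent root = root)
    (hreach : ∀ v : V, ∃ n : ℕ, parent^[n] v = root)
    (hfin : ∀ v : V, (children root parent v).Finite)
    (hdeg : ∀ v : V, (children root parent v).ncard ≤ k) :
    {v : V | IsLeaf root parent v ∧
      (ancestors parent v ∩ {u : V | Branching root parent u}).ncard ≤ m}.encard ≤ k ^ m := by
  by_contra! hlt
  obtain ⟨S, hS, hcard⟩ := Set.exists_subset_encard_eq (Order.add_one_le_of_lt hlt)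
  lift S to Finset V using Set.finite_of_encard_eq_coe (k := k ^ m + 1) (by exact_mod_cast hcard)
  have hle : S.card ≤ k ^ m := card_le_pow_of_antichain hk hroot hreach hfin hdeg
    (fun v hv w _ => (hS hv).1.notMem_ancestors hroot w) fun w hw => (hS hw).2
  rw [Set.encard_coe_eq_coe_finsetCard] at hcard
  norm_cast at hcard
  omega

/-- Let `k ≥ 1` and `m ≥ 0`, and let `T` be a finite rooted tree (encoded by a root and a
parent function, where the root is its own parent and every vertex reaches the root by
iterating the parent map) in which every vertex has at most `k` children. Then the number
of non-root leaves of `T` with at most `m` branching ancestors is at most `k^m`. -/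
theorem statement4 (k m : ℕ) (hk : 1 ≤ k) (V : Type*) [Fintype V]
    (root : V) (parent : V → V)
    (hroot : parent root = root)
    (hreach : ∀ v : V, ∃ n : ℕ, parent^[n] v = root)
    (hdeg : ∀ v : V, (children root parent v).ncard ≤ k) :
    {v : V | v ≠ root ∧ IsLeaf root parent v ∧
      (ancestors parent v ∩ {u : V | Branching root parent u}).ncard ≤ m}.ncard ≤ k ^ m := by
  refine (Set.ncard_le_ncard fun v hv => hv.2).trans (Set.encard_le_coe_iff_finite_ncard_le.mp ?_).2
  exact_mod_cast statement4_general k m hk V root parent hroot hreach (fun _ => Set.toFinite _) hdeg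
end

section
/- Let k, s ≥ 1 and m ≥ 0 be integers, and let S be a set of sequences of length s with entries in {0, 1, …, k−1}. For a sequence x ∈ S and an index 0 ≤ j < s, say that the length-j prefix of x is branching (with respect to S) if there exist two sequences in S that both agree with x in their first j entries but differ from each other in their (j+1)-st entry. Then the number of sequences x ∈ S that have at most m branching prefixes is at most k^m. -/
/-!
Record, for each sequence, the entries it takes right after its branching prefixes, in order. At the
first index where two sequences of `S` differ, the common prefix is branching and both sequences
have passed the same branching prefixes before it, so the two records differ in the same slot. A
sequence with at most `m` branching prefixes thus has a record consisting of at most `m` letters.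
-/

open Set Function

section Rank

variable {ι : Type*}

/-- The number of elements of `B` below `j`, so that the least element of a finite linearly ordered
`B` has rank `0`. If infinitely many elements of `B` lie below `j`, the value is `0`. -/
noncomputable def rankIn [Preorder ι] (B : Set ι) (j : ι) : ℕ :=
  (B ∩ Iio j).ncard

theorem rankIn_lt_ncard [Preorder ι] {B : Set ι} (hB : B.Finite) {j : ι} (hj : j ∈ B) :
    rankIn B j < B.ncard :=
  ncard_lt_ncard
    (ssubset_iff_of_subset inter_subset_left |>.2 ⟨j, hj, fun h => lt_irrefl j h.2⟩) hB

theorem strictMonoOn_rankIn [Preorder ι] {B : Set ι} (hB : B.Finite) :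
    StrictMonoOn (rankIn B) B := fun i hi _ _ hij =>
  ncard_lt_ncard
    (ssubset_iff_of_subset (inter_subset_inter_right B (Iio_subset_Iio hij.le)) |>.2
      ⟨i, ⟨hi, hij⟩, fun h => lt_irrefl i h.2⟩)
    (hB.subset inter_subset_left)

theorem leftInvOn_invFunOn_rankIn [LinearOrder ι] [Nonempty ι] {B : Set ι} (hB : B.Finite) :
    LeftInvOn (invFunOn (rankIn B) B) (rankIn B) B :=
  (strictMonoOn_rankIn hB).injOn.leftInvOn_invFunOn

end Rank

section Branching

variable {ι α : Type*} [Preorder ι] {S : Set (ι → α)} {x y : ι → α} {j : ι}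

/-- The indices `j` at which the prefix `(x i)_{i < j}` is branching with respect to `S`: it is
continued at `j` in two different ways by members of `S`. A prefix is encoded by the index at which
it ends (exclusively). -/
def branchingIndices (S : Set (ι → α)) (x : ι → α) : Set ι :=
  {j | ∃ y ∈ S, ∃ z ∈ S, EqOn y x (Iio j) ∧ EqOn z x (Iio j) ∧ y j ≠ z j}

theorem mem_branchingIndices_of_eqOn (hx : x ∈ S) (hy : y ∈ S) (hxy : EqOn x y (Iio j))
    (hne : x j ≠ y j) : j ∈ branchingIndices S x :=
  ⟨x, hx, y, hy, eqOn_refl x _, hxy.symm, hne⟩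

theorem branchingIndices_inter_Iio_subset (hxy : EqOn x y (Iio j)) :
    branchingIndices S x ∩ Iio j ⊆ branchingIndices S y := by
  rintro i ⟨⟨u, hu, v, hv, hux, hvx, hne⟩, hij⟩
  have hxy' : EqOn x y (Iio i) := hxy.mono (Iio_subset_Iio (le_of_lt hij))
  exact ⟨u, hu, v, hv, hux.trans hxy', hvx.trans hxy', hne⟩

theorem rankIn_branchingIndices_congr (hxy : EqOn x y (Iio j)) :
    rankIn (branchingIndices S x) j = rankIn (branchingIndices S y) j :=
  congrArg ncard <| Subset.antisymm
    (subset_inter (branchingIndices_inter_Iio_subset hxy) inter_subset_right)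
    (subset_inter (branchingIndices_inter_Iio_subset hxy.symm) inter_subset_right)

theorem exists_eqOn_Iio_and_ne [WellFoundedLT ι] (hne : x ≠ y) :
    ∃ j, EqOn x y (Iio j) ∧ x j ≠ y j := by
  obtain ⟨j, hj⟩ := exists_minimal_of_wellFoundedLT (fun j => x j ≠ y j) (ne_iff.1 hne)
  exact ⟨j, fun i hi => not_not.1 (hj.not_prop_of_lt hi), hj.prop⟩

end Branching

section Record

variable {ι α : Type*} [LinearOrder ι] [Nonempty ι] {S : Set (ι → α)} {m : ℕ} {x : ι → α} {j : ι}

/-- The first `m` entries of `x` at its branching indices. The slots beyond the number of branching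
indices hold an arbitrary entry of `x`. -/
noncomputable def branchingRecord (S : Set (ι → α)) (m : ℕ) (x : ι → α) : Fin m → α :=
  fun r => x (invFunOn (rankIn (branchingIndices S x)) (branchingIndices S x) r)

theorem branchingRecord_apply_of_rankIn_eq {r : Fin m} (hfin : (branchingIndices S x).Finite)
    (hj : j ∈ branchingIndices S x) (hr : rankIn (branchingIndices S x) j = r) :
    branchingRecord S m x r = x j := by
  rw [branchingRecord, ← hr, leftInvOn_invFunOn_rankIn hfin hj]

theorem injOn_branchingRecord [WellFoundedLT ι] (S : Set (ι → α)) (m : ℕ) :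
    InjOn (branchingRecord S m) {x ∈ S | (branchingIndices S x).encard ≤ m} := by
  rintro x ⟨hxS, hxm⟩ y ⟨hyS, hym⟩ hrecord
  by_contra hne
  obtain ⟨hxfin, hxcard⟩ := encard_le_coe_iff_finite_ncard_le.1 hxm
  have hyfin : (branchingIndices S y).Finite := finite_of_encard_le_coe hym
  obtain ⟨j, hxy, hj⟩ := exists_eqOn_Iio_and_ne hne
  have hjx : j ∈ branchingIndices S x := mem_branchingIndices_of_eqOn hxS hyS hxy hj
  have hjy : j ∈ branchingIndices S y := mem_branchingIndices_of_eqOn hyS hxS hxy.symm hj.symm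
  let r : Fin m := ⟨rankIn (branchingIndices S x) j, (rankIn_lt_ncard hxfin hjx).trans_le hxcard⟩
  refine hj ?_
  calc x j = branchingRecord S m x r := (branchingRecord_apply_of_rankIn_eq hxfin hjx rfl).symm
    _ = branchingRecord S m y r := congrFun hrecord r
    _ = y j := branchingRecord_apply_of_rankIn_eq hyfin hjy
      (rankIn_branchingIndices_congr hxy.symm)

theorem statement5_general [WellFoundedLT ι] (S : Set (ι → α)) (m : ℕ) :
    {x ∈ S | (branchingIndices S x).encard ≤ m}.encard ≤ ENat.card α ^ m :=
  calc {x ∈ S | (branchingIndices S x).encard ≤ m}.encard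
      ≤ (univ : Set (Fin m → α)).encard :=
        encard_le_encard_of_injOn (mapsTo_univ _ _) (injOn_branchingRecord S m)
    _ = ENat.card α ^ m := by simp [ENat.card_fun]

end Record

open Classical in
/-- Let `k, s ≥ 1`, `m ≥ 0`, and let `S` be a set of sequences of length `s` with entries in
`{0, …, k-1}` (functions `Fin s → Fin k`). Say the length-`j` prefix (`0 ≤ j < s`) of `x ∈ S`
is branching if there are two sequences in `S` agreeing with `x` in their first `j` entries but
differing from each other in their `(j+1)`-st entry. Then the number of `x ∈ S` with at most
`m` branching prefixes is at most `k^m`. -/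
theorem statement5 (k s m : ℕ) (hk : 1 ≤ k) (hs : 1 ≤ s) (S : Finset (Fin s → Fin k)) :
    (S.filter fun x : Fin s → Fin k =>
        (Finset.univ.filter fun j : Fin s =>
          ∃ y ∈ S, ∃ z ∈ S,
            (∀ i : Fin s, (i : ℕ) < (j : ℕ) → y i = x i) ∧
            (∀ i : Fin s, (i : ℕ) < (j : ℕ) → z i = x i) ∧
            y j ≠ z j).card ≤ m).card ≤ k ^ m := by
  have : Nonempty (Fin s) := ⟨⟨0, hs⟩⟩
  simpa [branchingIndices, EqOn, ← encard_coe_eq_coe_finsetCard, ← Nat.cast_le (α := ℕ∞)] using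
    statement5_general (S : Set (Fin s → Fin k)) m
end

section
/- Let t ≥ 1 be an integer and let H be a bipartite graph with bipartition (X, Y) such that every vertex of X has degree at most t. Then there is a constant C (depending on H) such that for every positive integer n, ex(n, H) ≤ C · n^{2 − 1/t}. -/
/-- A graph `G` contains a graph `H` as a subgraph if there is an injective graph
homomorphism from `H` to `G`. -/
def graphContains {W : Type*} {n : ℕ} (G : SimpleGraph (Fin n)) (H : SimpleGraph W) : Prop :=
  ∃ f : W → Fin n, Function.Injective f ∧ ∀ u v, H.Adj u v → G.Adj (f u) (f v)

/-- The (unordered) graph extremal number `ex(n, H)`: the maximum number of edges in a graph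
on `n` vertices not containing `H` as a subgraph. -/
noncomputable def graphEx {W : Type*} (n : ℕ) (H : SimpleGraph W) : ℕ :=
  sSup {e : ℕ | ∃ G : SimpleGraph (Fin n), ¬ graphContains G H ∧ G.edgeSet.ncard = e}

/-!
Dependent random choice: pick a `t`-tuple `T` of vertices of `G` uniformly at random and let `U` be
its common neighborhood. By the power mean inequality `U` is large on average, whereas a set `S`
with few common neighbors is unlikely to lie in `U`, since this happens exactly when every entry
of `T` is a common neighbor of `S`. Deleting one vertex from each bad set `S ⊆ U` leaves a large
set `A` all of whose small subsets have many common neighbors. Place the vertices outside `X`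
injectively in `A`; every vertex of `X` then has enough candidates for its image.
-/

open Finset SimpleGraph

section Finsets

variable {α : Type*}

lemma exists_subset_card_le_and_forall_not_subset (U : Finset α) {B : Finset (Finset α)}
    (hB : ∀ S ∈ B, S.Nonempty) : ∃ A ⊆ U, #U ≤ #A + #B ∧ ∀ S ∈ B, ¬S ⊆ A := by
  classical
  choose v hv using fun S : B ↦ hB S S.2
  refine ⟨U \ univ.image v, sdiff_subset, ?_, fun S hS hSA ↦ ?_⟩
  · calc #U ≤ #(U \ univ.image v) + #(univ.image v) :=
          tsub_le_iff_right.mp (le_card_sdiff (univ.image v) U)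
      _ ≤ #(U \ univ.image v) + Fintype.card B := by gcongr; exact card_image_le
      _ = #(U \ univ.image v) + #B := by rw [Fintype.card_coe]
  · exact (mem_sdiff.mp (hSA (hv ⟨S, hS⟩))).2 (mem_image_of_mem v (mem_univ _))

lemma exists_image_univ_eq_of_card_le [DecidableEq α] {S : Finset α} (hS : S.Nonempty) {r : ℕ}
    (hr : #S ≤ r) : ∃ T : Fin r → α, univ.image T = S := by
  obtain ⟨T, hT⟩ : ∃ T : Fin r → S, T.Surjective := by
    have := hS.to_subtype
    exact Function.exists_surjective_iff.mpr
      ⟨inferInstance, Function.Embedding.nonempty_of_card_le (by simpa)⟩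
  refine ⟨fun i ↦ T i, ?_⟩
  ext v
  simpa using (hT.exists (p := fun w ↦ (w : α) = v)).symm

lemma card_filter_nonempty_card_le_le_pow [Fintype α] (r : ℕ) :
    #{S : Finset α | S.Nonempty ∧ #S ≤ r} ≤ Fintype.card α ^ r := by
  classical
  calc #{S : Finset α | S.Nonempty ∧ #S ≤ r}
      ≤ #(univ.image fun T : Fin r → α ↦ univ.image T) := by
        refine card_le_card fun S hS ↦ ?_
        obtain ⟨hne, hcard⟩ := (mem_filter_univ S).mp hS
        obtain ⟨T, rfl⟩ := exists_image_univ_eq_of_card_le hne hcard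
        exact mem_image_of_mem _ (mem_univ T)
    _ ≤ Fintype.card (Fin r → α) := card_image_le
    _ = Fintype.card α ^ r := by simp

lemma exists_injective_eqOn_compl_of_card_le {ι : Type*} [Fintype ι] {X : Set ι} {f : ι → α}
    (hf : Set.InjOn f Xᶜ) {L : ι → Finset α} (hL : ∀ i ∈ X, Fintype.card ι ≤ #(L i)) :
    ∃ g : ι → α, g.Injective ∧ Set.EqOn g f Xᶜ ∧ ∀ i ∈ X, g i ∈ L i := by
  classical
  -- Singleton lists off `X` force the transversal from Hall's theorem to extend `f`.
  let L' : ι → Finset α := fun i ↦ if i ∈ X then L i else {f i}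
  have hall : ∀ s : Finset ι, #s ≤ #(s.biUnion L') := by
    intro s
    by_cases hs : ∃ i ∈ s, i ∈ X
    · obtain ⟨i, his, hiX⟩ := hs
      calc #s ≤ Fintype.card ι := card_le_univ s
        _ ≤ #(L i) := hL i hiX
        _ = #(L' i) := by rw [show L' i = L i from if_pos hiX]
        _ ≤ #(s.biUnion L') := card_le_card (subset_biUnion_of_mem L' his)
    · have hsX : ∀ i ∈ s, i ∉ X := fun i hi hiX ↦ hs ⟨i, hi, hiX⟩
      rw [← card_image_of_injOn (hf.mono hsX), ← biUnion_singleton,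
        biUnion_congr rfl fun i hi ↦ (if_neg (hsX i hi)).symm]
  obtain ⟨g, hg, hgL'⟩ := (all_card_le_biUnion_card_iff_exists_injective L').mp hall
  refine ⟨g, hg, fun i hi ↦ ?_, fun i hi ↦ ?_⟩
  · simpa [L', if_neg hi] using hgL' i
  · simpa [L', if_pos hi] using hgL' i

end Finsets

section CommonNeighbors

variable {V : Type*} [Fintype V] (G : SimpleGraph V) [DecidableRel G.Adj]

/-- The common neighborhood of the vertices in `S`, which dependent random choice makes large for
all small subsets `S` of a suitable vertex set; for `S = ∅` it consists of all vertices. -/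
def commonNeighborFinset (S : Finset V) : Finset V := {v | ∀ s ∈ S, G.Adj s v}

variable {G}

@[simp]
lemma mem_commonNeighborFinset {S : Finset V} {v : V} :
    v ∈ commonNeighborFinset G S ↔ ∀ s ∈ S, G.Adj s v := by
  simp [commonNeighborFinset]

lemma commonNeighborFinset_empty : commonNeighborFinset G ∅ = univ := by
  ext; simp

lemma commonNeighborFinset_singleton (v : V) :
    commonNeighborFinset G {v} = G.neighborFinset v := by
  ext; simp

section DecidableEq

variable [DecidableEq V]

lemma subset_commonNeighborFinset_image_univ {ι : Type*} [Fintype ι] {S : Finset V} {T : ι → V} :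
    S ⊆ commonNeighborFinset G (univ.image T) ↔ ∀ i, T i ∈ commonNeighborFinset G S := by
  simp only [subset_iff, mem_commonNeighborFinset, forall_mem_image, mem_univ, true_imp_iff]
  exact ⟨fun h i s hs ↦ (@h s hs i).symm, fun h s hs i ↦ (h i s hs).symm⟩

lemma card_filter_subset_commonNeighborFinset_image_univ (S : Finset V) (t : ℕ) :
    #{T : Fin t → V | S ⊆ commonNeighborFinset G (univ.image T)}
      = #(commonNeighborFinset G S) ^ t := by
  simp_rw [subset_commonNeighborFinset_image_univ]
  rw [← Fintype.card_piFinset_const]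
  congr 1
  ext T
  simp only [mem_filter_univ, Fintype.mem_piFinset]

lemma sum_card_filter_subset_commonNeighborFinset (B : Finset (Finset V)) (t : ℕ) :
    ∑ T : Fin t → V, #{S ∈ B | S ⊆ commonNeighborFinset G (univ.image T)}
      = ∑ S ∈ B, #(commonNeighborFinset G S) ^ t := by
  simp_rw [← card_filter_subset_commonNeighborFinset_image_univ]
  exact sum_card_bipartiteAbove_eq_sum_card_bipartiteBelow _

variable (G) in
lemma sum_card_commonNeighborFinset_image_univ (t : ℕ) :
    ∑ T : Fin t → V, #(commonNeighborFinset G (univ.image T)) = ∑ v, G.degree v ^ t := by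
  have hdeg (v : V) :
      G.degree v ^ t = #{T : Fin t → V | v ∈ commonNeighborFinset G (univ.image T)} := by
    simp_rw [← singleton_subset_iff]
    rw [card_filter_subset_commonNeighborFinset_image_univ, commonNeighborFinset_singleton,
      card_neighborFinset_eq_degree]
  simp_rw [hdeg]
  simpa only [bipartiteAbove, bipartiteBelow, filter_univ_mem] using
    sum_card_bipartiteAbove_eq_sum_card_bipartiteBelow (s := univ) (t := univ)
      fun (T : Fin t → V) v ↦ v ∈ commonNeighborFinset G (univ.image T)

end DecidableEq

/-- After division by `Fintype.card V ^ t`, the hypothesis compares the expected size of the common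
neighborhood of a uniformly random `t`-tuple with an upper bound for the expected number of bad
sets inside it. -/
theorem dependent_random_choice [Nonempty V] {a k r t : ℕ}
    (h : a * Fintype.card V ^ t + Fintype.card V ^ r * k ^ t ≤ ∑ v, G.degree v ^ t) :
    ∃ A : Finset V, a ≤ #A ∧
      ∀ S ⊆ A, S.Nonempty → #S ≤ r → k ≤ #(commonNeighborFinset G S) := by
  classical
  let bad : Finset (Finset V) := {S | (S.Nonempty ∧ #S ≤ r) ∧ #(commonNeighborFinset G S) < k}
  let badIn (T : Fin t → V) : Finset (Finset V) :=
    {S ∈ bad | S ⊆ commonNeighborFinset G (univ.image T)}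
  have hbad : ∑ T, #(badIn T) ≤ Fintype.card V ^ r * k ^ t :=
    calc ∑ T, #(badIn T)
        = ∑ S ∈ bad, #(commonNeighborFinset G S) ^ t :=
          sum_card_filter_subset_commonNeighborFinset bad t
      _ ≤ #bad * k ^ t := by
          refine sum_le_card_nsmul _ _ _ fun S hS ↦ ?_
          gcongr
          exact ((mem_filter_univ S).mp hS).2.le
      _ ≤ Fintype.card V ^ r * k ^ t := by
          gcongr
          refine (card_le_card fun S hS ↦ ?_).trans (card_filter_nonempty_card_le_le_pow r)
          exact (mem_filter_univ S).mpr ((mem_filter_univ S).mp hS).1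
  obtain ⟨T, -, hT⟩ : ∃ T ∈ univ, a + #(badIn T) ≤ #(commonNeighborFinset G (univ.image T)) := by
    refine exists_le_of_sum_le univ_nonempty ?_
    calc ∑ T, (a + #(badIn T)) = a * Fintype.card V ^ t + ∑ T, #(badIn T) := by
          simp [sum_add_distrib, mul_comm]
      _ ≤ a * Fintype.card V ^ t + Fintype.card V ^ r * k ^ t := by gcongr
      _ ≤ ∑ v, G.degree v ^ t := h
      _ = _ := (sum_card_commonNeighborFinset_image_univ G t).symm
  have hne : ∀ S ∈ badIn T, S.Nonempty := fun S hS ↦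
    ((mem_filter_univ S).mp (mem_filter.mp hS).1).1.1
  obtain ⟨A, hAT, hcard, hA⟩ := exists_subset_card_le_and_forall_not_subset
    (commonNeighborFinset G (univ.image T)) hne
  refine ⟨A, by omega, fun S hSA hS hSr ↦ ?_⟩
  by_contra! hlt
  exact hA S (mem_filter.mpr ⟨(mem_filter_univ S).mpr ⟨⟨hS, hSr⟩, hlt⟩, hSA.trans hAT⟩) hSA

end CommonNeighbors

section Embedding

variable {V W : Type*} [Fintype V] [Fintype W] {G : SimpleGraph V} {H : SimpleGraph W}
  [DecidableRel G.Adj] [DecidableRel H.Adj] {X Y : Set W}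

lemma isContained_of_le_card_commonNeighborFinset_image [DecidableEq V]
    (hH : H.IsBipartiteWith X Y) {f : W → V} (hf : Set.InjOn f Xᶜ)
    (hcard : ∀ x ∈ X,
      Fintype.card W ≤ #(commonNeighborFinset G ((H.neighborFinset x).image f))) :
    H ⊑ G := by
  obtain ⟨g, hg, hgf, hgX⟩ := exists_injective_eqOn_compl_of_card_le hf hcard
  have hadj {x y : W} (hx : x ∈ X) (hxy : H.Adj x y) : G.Adj (g x) (g y) := by
    have hy : y ∉ X := hH.disjoint.notMem_of_mem_right (hH.mem_of_mem_adj hx hxy)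
    rw [hgf hy]
    refine (mem_commonNeighborFinset.mp (hgX x hx) (f y) ?_).symm
    exact mem_image_of_mem f ((H.mem_neighborFinset x y).mpr hxy)
  refine ⟨⟨⟨g, fun {u v} huv ↦ ?_⟩, hg⟩⟩
  rcases hH.mem_of_adj huv with ⟨hu, -⟩ | ⟨-, hv⟩
  · exact hadj hu huv
  · exact (hadj hv huv.symm).symm

lemma isContained_of_forall_le_card_commonNeighborFinset (hH : H.IsBipartiteWith X Y) {t : ℕ}
    (hdeg : ∀ x ∈ X, H.degree x ≤ t) {A : Finset V} (hA : Fintype.card W ≤ #A)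
    (hN : ∀ S ⊆ A, S.Nonempty → #S ≤ t → Fintype.card W ≤ #(commonNeighborFinset G S)) :
    H ⊑ G := by
  classical
  obtain ⟨f⟩ : Nonempty (W ↪ A) := Function.Embedding.nonempty_of_card_le (by simpa)
  let f' : W → V := fun w ↦ f w
  have hf' : f'.Injective := Subtype.val_injective.comp f.injective
  refine isContained_of_le_card_commonNeighborFinset_image hH hf'.injOn fun x hx ↦ ?_
  rcases ((H.neighborFinset x).image f').eq_empty_or_nonempty with hempty | hne
  · rw [hempty, commonNeighborFinset_empty]
    exact hA.trans (card_le_univ A)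
  · exact hN _ (image_subset_iff.mpr fun w _ ↦ (f w).2) hne (card_image_le.trans (hdeg x hx))

end Embedding

section Counting

lemma rpow_two_sub_one_div_pow {x : ℝ} (hx : 0 ≤ x) (s : ℕ) :
    (x ^ (2 - 1 / ((s + 1 : ℕ) : ℝ))) ^ (s + 1) = x ^ (2 * s + 1) := by
  rw [← Real.rpow_mul_natCast hx, ← Real.rpow_natCast]
  congr 1
  push_cast
  field_simp
  ring

variable {V : Type*} [Fintype V] {G : SimpleGraph V} [DecidableRel G.Adj]

lemma two_mul_card_edgeFinset_pow_le (s : ℕ) :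
    (2 * #G.edgeFinset) ^ (s + 1) ≤ Fintype.card V ^ s * ∑ v, G.degree v ^ (s + 1) := by
  rw [← G.sum_degrees_eq_twice_card_edges]
  exact pow_sum_le_card_mul_sum_pow (fun _ _ ↦ Nat.zero_le _) s

lemma pow_mul_card_pow_le_sum_degree_pow [Nonempty V] {t : ℕ} (ht : t ≠ 0) {c : ℝ} (hc : 0 ≤ c)
    (h : c * (Fintype.card V : ℝ) ^ (2 - 1 / (t : ℝ)) ≤ #G.edgeFinset) :
    (2 * c) ^ t * (Fintype.card V : ℝ) ^ t ≤ ∑ v, (G.degree v : ℝ) ^ t := by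
  obtain ⟨s, rfl⟩ := Nat.exists_eq_succ_of_ne_zero ht
  have hn : (0 : ℝ) < Fintype.card V := mod_cast Fintype.card_pos
  have hmean : (2 * #G.edgeFinset : ℝ) ^ (s + 1)
      ≤ (Fintype.card V : ℝ) ^ s * ∑ v, (G.degree v : ℝ) ^ (s + 1) :=
    mod_cast two_mul_card_edgeFinset_pow_le s
  set n : ℝ := (Fintype.card V : ℝ)
  refine le_of_mul_le_mul_left ?_ (pow_pos hn s)
  calc n ^ s * ((2 * c) ^ (s + 1) * n ^ (s + 1))
      = (2 * (c * n ^ (2 - 1 / ((s + 1 : ℕ) : ℝ)))) ^ (s + 1) := by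
        rw [← mul_assoc 2, mul_pow _ (n ^ _), rpow_two_sub_one_div_pow hn.le]; ring
    _ ≤ (2 * #G.edgeFinset) ^ (s + 1) := by gcongr
    _ ≤ n ^ s * ∑ v, (G.degree v : ℝ) ^ (s + 1) := hmean

end Counting

section ExtremalNumber

variable {W : Type*} [Fintype W] {H : SimpleGraph W} {X Y : Set W}

theorem isContained_of_card_mul_rpow_le {V : Type*} [Fintype V] [Nonempty V] {G : SimpleGraph V}
    [DecidableRel G.Adj] [DecidableRel H.Adj] (hH : H.IsBipartiteWith X Y) {t : ℕ} (ht : t ≠ 0)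
    (hdeg : ∀ x ∈ X, H.degree x ≤ t)
    (h : Fintype.card W * (Fintype.card V : ℝ) ^ (2 - 1 / (t : ℝ)) ≤ #G.edgeFinset) :
    H ⊑ G := by
  classical
  have hpow : Fintype.card W + Fintype.card W ^ t ≤ (2 * Fintype.card W) ^ t :=
    calc Fintype.card W + Fintype.card W ^ t
        ≤ Fintype.card W ^ t + Fintype.card W ^ t := by gcongr; exact Nat.le_self_pow ht _
      _ = 2 * Fintype.card W ^ t := (two_mul _).symm
      _ ≤ 2 ^ t * Fintype.card W ^ t := by gcongr; exact Nat.le_self_pow ht 2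
      _ = (2 * Fintype.card W) ^ t := (mul_pow _ _ _).symm
  have hsum : Fintype.card W * Fintype.card V ^ t + Fintype.card V ^ t * Fintype.card W ^ t
      ≤ ∑ v, G.degree v ^ t :=
    calc _ = (Fintype.card W + Fintype.card W ^ t) * Fintype.card V ^ t := by ring
      _ ≤ (2 * Fintype.card W) ^ t * Fintype.card V ^ t := by gcongr
      _ ≤ ∑ v, G.degree v ^ t :=
        mod_cast pow_mul_card_pow_le_sum_degree_pow ht (Nat.cast_nonneg _) h
  obtain ⟨A, hA, hN⟩ := dependent_random_choice hsum
  exact isContained_of_forall_le_card_commonNeighborFinset hH hdeg hA hN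

theorem extremalNumber_le_card_mul_rpow [DecidableRel H.Adj] (hH : H.IsBipartiteWith X Y) {t : ℕ}
    (ht : t ≠ 0) (hdeg : ∀ x ∈ X, H.degree x ≤ t) {n : ℕ} (hn : n ≠ 0) :
    (extremalNumber n H : ℝ) ≤ Fintype.card W * (n : ℝ) ^ (2 - 1 / (t : ℝ)) := by
  have : NeZero n := ⟨hn⟩
  rw [← Fintype.card_fin n, extremalNumber_le_iff_of_nonneg H (by positivity)]
  intro G _ hfree
  contrapose! hfree
  exact isContained_of_card_mul_rpow_le hH ht hdeg hfree.le

end ExtremalNumber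

lemma graphContains_iff_isContained {W : Type*} {n : ℕ} {G : SimpleGraph (Fin n)}
    {H : SimpleGraph W} : graphContains G H ↔ H ⊑ G :=
  ⟨fun ⟨f, hf, hadj⟩ ↦ ⟨⟨⟨f, hadj _ _⟩, hf⟩⟩, fun ⟨f⟩ ↦ ⟨f, f.injective, fun _ _ ↦ f.toHom.map_adj⟩⟩

lemma graphEx_le_extremalNumber {W : Type*} (n : ℕ) (H : SimpleGraph W) :
    graphEx n H ≤ extremalNumber n H := by
  classical
  refine csSup_le' ?_
  rintro _ ⟨G, hG, rfl⟩
  rw [graphContains_iff_isContained] at hG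
  rw [← coe_edgeFinset, Set.ncard_coe_finset]
  simpa using card_edgeFinset_le_extremalNumber hG

/-- Let `H` be a (finite) bipartite graph with bipartition `(X, Y)` (every edge has exactly one
endpoint in `X`) such that every vertex of `X` has degree at most `t ≥ 1`. Then
`ex(n, H) ≤ C · n^(2 - 1/t)` for some constant `C` and all positive integers `n`. -/
theorem statement8 (t : ℕ) (ht : 1 ≤ t) (W : Type*) [Fintype W]
    (H : SimpleGraph W) (X : Set W)
    (hbip : ∀ u v : W, H.Adj u v → (u ∈ X ↔ v ∉ X))
    (hdeg : ∀ u ∈ X, (H.neighborSet u).ncard ≤ t) :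
    ∃ C : ℝ, 0 < C ∧ ∀ n : ℕ, 0 < n →
      (graphEx n H : ℝ) ≤ C * (n : ℝ) ^ (2 - 1 / (t : ℝ)) := by
  classical
  have hH : H.IsBipartiteWith X Xᶜ := ⟨disjoint_compl_right, fun u v huv ↦ by
    have := hbip u v huv
    simp only [Set.mem_compl_iff]
    tauto⟩
  have hdegree : ∀ x ∈ X, H.degree x ≤ t := by
    simpa [← card_neighborSet_eq_degree, ← Nat.card_eq_fintype_card] using hdeg
  refine ⟨Fintype.card W + 1, by positivity, fun n hn ↦ ?_⟩
  calc (graphEx n H : ℝ) ≤ extremalNumber n H := mod_cast graphEx_le_extremalNumber n H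
    _ ≤ Fintype.card W * (n : ℝ) ^ (2 - 1 / (t : ℝ)) :=
      extremalNumber_le_card_mul_rpow hH (by omega) hdegree hn.ne'
    _ ≤ (Fintype.card W + 1) * (n : ℝ) ^ (2 - 1 / (t : ℝ)) := by gcongr; linarith
end
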